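/- Assume the vertex c is controllable, let d ≥ 2, and let α_v, β_v (v ∈ D^d) be real constants. Then: (1) if ∑_{v∈D^d} α_v ∂_{p_v} ∈ 𝓜 then ∑_{v∈D^d} α_v x_v ∂_{p_v} ∈ 𝓜; and (2) if both ∑_{v∈D^d} α_v ∂_{p_v} ∈ 𝓜 and ∑_{v∈D^d} β_v ∂_{p_v} ∈ 𝓜, then ∑_{v∈D^d} α_v β_v ∂_{p_v} ∈ 𝓜. -/

import Mathlib

/-!
For `P : V → ℝ[X]` let `W_P = ∑_v P_v(q_c − q_v) ∂_{p_v}` (`polyField`).  The bracket of a constant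
field `(a, e)` with `W_P` is again of this form, with `P_v` replaced by `(a_c − a_v) P_v'`.

Bracketing `∂_{q_c}` with `X₀` and discarding the `∂_{p_c}`-component gives `W_P ∈ 𝓜` for
`P_v = V''_{cv}` (`v ∈ 𝒯`); further brackets with `∂_{q_c}` differentiate the `P_v`.
If `∑ α_v ∂_{p_v} ∈ 𝓜`, then a bracket with `X₀` yields `∑ α_v ∂_{q_v} ∈ 𝓜`, the friction terms
being removed because `γ_v ≠ 0` only for `v ∈ V*`.  Bracketing this with the `(d−2)`-nd derivative
of the field above gives `∑ α_v b_v x_v ∂_{p_v} ∈ 𝓜`, where `b_v = d! · lc(V''_{cv}) ≠ 0`, since the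
`(d−1)`-st derivative of a polynomial of degree `d` is affine and the shift in `x_v` is exactly
its zero (`linear_step`).

Bracketing with `∂_{q_c}` or `∑ β_v ∂_{q_v}` shows that the space of admissible coefficient
vectors `α` is stable under `α ↦ α b` and `(α, β) ↦ α β b`.  Stability under `α ↦ α b` gives
stability under `α ↦ α p(b)` for every polynomial `p`; Lagrange interpolation supplies a `p` with
`p(b_v) = 1/b_v` on the finite set `D^d`, so the factor `b` can be divided out (`divide_coeff_mem`), which
gives both claims.
-/

open scoped Classical
open Polynomial

noncomputable section

/-- Phase space ℝ^{2|V|}: positions `q = x.1` and momenta `p = x.2`. -/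
abbrev Phase (V : Type) := (V → ℝ) × (V → ℝ)

/-- Lie bracket of vector fields: `[Y,Z](x) = DZ(x)·Y(x) − DY(x)·Z(x)`. -/
def lieB {V : Type} [Fintype V] (Y Z : Phase V → Phase V) : Phase V → Phase V :=
  fun x => fderiv ℝ Z x (Y x) - fderiv ℝ Y x (Z x)

/-- The constant vector field `∂_{p_v}`. -/
def dp {V : Type} [Fintype V] [DecidableEq V] (v : V) : Phase V → Phase V :=
  fun _ => (0, Pi.single v 1)

/-- The constant vector field `∂_{q_v}`. -/
def dq {V : Type} [Fintype V] [DecidableEq V] (v : V) : Phase V → Phase V :=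
  fun _ => (Pi.single v 1, 0)

/-- The constant vector field `∑_{v ∈ A} ∂_{p_v}`. -/
def dpSum {V : Type} [Fintype V] [DecidableEq V] (A : Finset V) : Phase V → Phase V :=
  fun _ => (0, ∑ v ∈ A, Pi.single v 1)

/-- The constant vector field `∑_{v ∈ A} ∂_{q_v}`. -/
def dqSum {V : Type} [Fintype V] [DecidableEq V] (A : Finset V) : Phase V → Phase V :=
  fun _ => (∑ v ∈ A, Pi.single v 1, 0)

/-- The drift vector field
`X₀ = −∑_{v∈V*} γ_v p_v ∂_{p_v} + ∑_{v∈V} (p_v ∂_{q_v} − U_v'(q_v) ∂_{p_v})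
      − ∑_{{u,v}∈E} V_{uv}'(q_u − q_v)(∂_{p_u} − ∂_{p_v})`,
written componentwise (using the symmetry `V_{vu}(x) = V_{uv}(−x)` of the
interaction potentials, the `∂_{p_v}`-component of the edge term at a vertex `v` is
`−∑_{w ~ v} V_{vw}'(q_v − q_w)`). -/
def X0 {V : Type} [Fintype V] [DecidableEq V] (G : SimpleGraph V) [DecidableRel G.Adj]
    (γ : V → ℝ) (U : V → ℝ → ℝ) (Vp : V → V → Polynomial ℝ) : Phase V → Phase V :=
  fun x =>
    (x.2, fun v =>
      -(γ v) * x.2 v - deriv (U v) (x.1 v) -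
        ∑ w ∈ Finset.univ.filter (fun w => G.Adj v w),
          (derivative (Vp v w)).eval (x.1 v - x.1 w))

/-- The smallest collection `𝓜` of vector fields on `ℝ^{2|V|}` that contains `∂_{p_v}`
for every `v ∈ V*`, and is closed under linear combinations, Lie brackets,
bracketing with `X₀`, and multiplication by smooth scalar functions. -/
inductive MM {V : Type} [Fintype V] [DecidableEq V] (Vstar : Finset V)
    (X₀ : Phase V → Phase V) : (Phase V → Phase V) → Prop
  | basic (v : V) (hv : v ∈ Vstar) : MM Vstar X₀ (dp v)
  | add {Y Z : Phase V → Phase V} : MM Vstar X₀ Y → MM Vstar X₀ Z → MM Vstar X₀ (Y + Z)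
  | smul (a : ℝ) {Y : Phase V → Phase V} : MM Vstar X₀ Y → MM Vstar X₀ (a • Y)
  | lie {Y Z : Phase V → Phase V} : MM Vstar X₀ Y → MM Vstar X₀ Z → MM Vstar X₀ (lieB Y Z)
  | lieX {Y : Phase V → Phase V} : MM Vstar X₀ Y → MM Vstar X₀ (lieB Y X₀)
  | mulS (f : Phase V → ℝ) (hf : ContDiff ℝ (⊤ : ℕ∞) f) {Y : Phase V → Phase V} :
      MM Vstar X₀ Y → MM Vstar X₀ (fun x => f x • Y x)

/-- A vertex `v` is controllable if `∂_{q_v} ∈ 𝓜` and `∂_{p_v} ∈ 𝓜`. -/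
def Controllable {V : Type} [Fintype V] [DecidableEq V] (Vstar : Finset V)
    (X₀ : Phase V → Phase V) (v : V) : Prop :=
  MM Vstar X₀ (dq v) ∧ MM Vstar X₀ (dp v)

/-- Two polynomials are equivalent if `f(·) = g(· + δ)` for some `δ ∈ ℝ`. -/
def PolyEquiv (f g : Polynomial ℝ) : Prop :=
  ∃ δ : ℝ, ∀ x : ℝ, f.eval x = g.eval (x + δ)

/-- The set 𝒯 of neighbors ("targets") of a vertex `c`. -/
def Tset {V : Type} [Fintype V] [DecidableEq V] (G : SimpleGraph V) [DecidableRel G.Adj]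
    (c : V) : Finset V :=
  Finset.univ.filter fun w => G.Adj c w

/-- The shift making a polynomial `g = ∑ a_i t^i/i!` of degree `k` adjusted
(i.e. killing the coefficient `a_{k−1}`), namely `a_{k−1}/a_k = coeff_{k−1}/(k·coeff_k)`. -/
def adjShift (g : Polynomial ℝ) : ℝ :=
  g.coeff (g.natDegree - 1) / ((g.natDegree : ℝ) * g.leadingCoeff)

/-- The adjusted representation `g̃(·) = g(· − a_{k−1}/a_k)` of a polynomial `g`. -/
def adjRep (g : Polynomial ℝ) : Polynomial ℝ :=
  g.comp (Polynomial.X - Polynomial.C (adjShift g))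

/-- `f̃_v`, the adjusted representation of `V''_{cv}`. -/
def ft {V : Type} (Vp : V → V → Polynomial ℝ) (c v : V) : Polynomial ℝ :=
  adjRep (derivative (derivative (Vp c v)))

/-- `d = max_{v∈𝒯} d_v`, the maximal degree of the adjusted polynomials `f̃_v`, `v ∈ 𝒯`. -/
def dmax {V : Type} [Fintype V] [DecidableEq V] (G : SimpleGraph V) [DecidableRel G.Adj]
    (Vp : V → V → Polynomial ℝ) (c : V) : ℕ :=
  (Tset G c).sup fun v => (ft Vp c v).natDegree

/-- `D^d = {v ∈ 𝒯 : d_v = d}`, the neighbors of `c` of maximal adjusted degree. -/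
def Dd {V : Type} [Fintype V] [DecidableEq V] (G : SimpleGraph V) [DecidableRel G.Adj]
    (Vp : V → V → Polynomial ℝ) (c : V) : Finset V :=
  (Tset G c).filter fun v => (ft Vp c v).natDegree = dmax G Vp c

/-- The coefficient `b_{vℓ}` in `f̃_v(x) = ∑_j b_{vj} x^j/j!`, i.e. `b_{vℓ} = ℓ!·coeff_ℓ(f̃_v)`. -/
def bcoef {V : Type} (Vp : V → V → Polynomial ℝ) (c v : V) (ℓ : ℕ) : ℝ :=
  (Nat.factorial ℓ : ℝ) * (ft Vp c v).coeff ℓ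

/-- The scalar function `x_v = q_c − q_v + δ_{cv}`, with `δ_{cv}` the adjusting shift
of `V''_{cv}`. -/
def xv {V : Type} [Fintype V] (Vp : V → V → Polynomial ℝ) (c v : V) : Phase V → ℝ :=
  fun x => x.1 c - x.1 v + adjShift (derivative (derivative (Vp c v)))

/-! ### Fields and brackets -/

/-- The vector field `∑_v P_v(q_c − q_v) ∂_{p_v}` attached to a family of polynomials `P`. -/
def polyField {V : Type} (c : V) (P : V → Polynomial ℝ) : Phase V → Phase V :=
  fun x => (0, fun v => (P v).eval (x.1 c - x.1 v))

lemma contDiff_deriv_pinning {V : Type} (U : V → ℝ → ℝ)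
    (hU : ∀ v, ContDiff ℝ (⊤ : ℕ∞) (U v)) (v : V) :
    ContDiff ℝ (⊤ : ℕ∞) (deriv (U v)) :=
  (contDiff_infty_iff_deriv.1 (hU v)).2

section brackets

variable {V : Type} [Fintype V]

lemma lieB_const (y : Phase V) {Z : Phase V → Phase V} (hZ : Differentiable ℝ Z)
    {W : Phase V → Phase V}
    (h : ∀ x, HasDerivAt (fun t : ℝ => Z (x + t • y)) (W x) 0) :
    lieB (fun _ => y) Z = W := by
  funext x
  have h1 := ((hZ x).hasFDerivAt.hasLineDerivAt y).unique (h x)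
  simp [lieB, h1]

lemma differentiable_polyField (c : V) (P : V → Polynomial ℝ) :
    Differentiable ℝ (polyField c P) := by
  unfold polyField
  refine (differentiable_const _).prodMk (differentiable_pi.2 fun v => ?_)
  exact (P v).differentiable.comp (by fun_prop)

lemma hasDerivAt_line (s r : ℝ) : HasDerivAt (fun t : ℝ => s + t * r) r 0 := by
  simpa using ((hasDerivAt_id (0 : ℝ)).mul_const r).const_add s

lemma hasDerivAt_poly_line (p : Polynomial ℝ) (s r : ℝ) :
    HasDerivAt (fun t : ℝ => p.eval (s + t * r)) (p.derivative.eval s * r) 0 := by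
  have h := (p.hasDerivAt (s + 0 * r)).comp (0 : ℝ) (hasDerivAt_line s r)
  rw [zero_mul, add_zero] at h
  exact h

lemma lieB_const_polyField (c : V) (a e : V → ℝ) (P : V → Polynomial ℝ) :
    lieB (fun _ => (a, e)) (polyField c P)
      = polyField c (fun v => C (a c - a v) * derivative (P v)) := by
  refine lieB_const (a, e) (differentiable_polyField c P) fun x => ?_
  refine (hasDerivAt_const _ _).prodMk (hasDerivAt_pi.2 fun v => ?_)
  have h := hasDerivAt_poly_line (P v) (x.1 c - x.1 v) (a c - a v)
  have hfun : (fun t : ℝ => (P v).eval ((x + t • (a, e)).1 c - (x + t • (a, e)).1 v))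
      = fun t => (P v).eval (x.1 c - x.1 v + t * (a c - a v)) := by
    funext t
    simp only [Prod.fst_add, Prod.smul_fst, Pi.add_apply, Pi.smul_apply, smul_eq_mul]
    ring_nf
  rw [hfun]
  exact h.congr_deriv (by simp [mul_comm])

variable [DecidableEq V] (G : SimpleGraph V) [DecidableRel G.Adj] (γ : V → ℝ) (U : V → ℝ → ℝ)
  (Vp : V → V → Polynomial ℝ)

lemma differentiable_X0 (hU : ∀ v, ContDiff ℝ (⊤ : ℕ∞) (U v)) :
    Differentiable ℝ (X0 G γ U Vp) := by
  unfold X0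
  refine differentiable_snd.prodMk (differentiable_pi.2 fun v => ?_)
  have h1 : Differentiable ℝ (deriv (U v)) :=
    (contDiff_deriv_pinning U hU v).differentiable (by simp)
  refine ((by fun_prop : Differentiable ℝ fun x : Phase V => -(γ v) * x.2 v).sub
    (h1.comp (by fun_prop))).sub ?_
  refine Differentiable.fun_sum fun w _ => ?_
  exact (derivative (Vp v w)).differentiable.comp (by fun_prop)

lemma lieB_const_X0 (hU : ∀ v, ContDiff ℝ (⊤ : ℕ∞) (U v)) (a e : V → ℝ) :
    lieB (fun _ => (a, e)) (X0 G γ U Vp) = fun x => (e, fun v =>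
      -(γ v) * e v - deriv (deriv (U v)) (x.1 v) * a v -
        ∑ w ∈ Finset.univ.filter (fun w => G.Adj v w),
          (derivative (derivative (Vp v w))).eval (x.1 v - x.1 w) * (a v - a w)) := by
  refine lieB_const (a, e) (differentiable_X0 G γ U Vp hU) fun x => ?_
  refine HasDerivAt.prodMk ?_ (hasDerivAt_pi.2 fun v => ?_)
  · simpa using ((hasDerivAt_id (0 : ℝ)).smul_const e).const_add x.2
  · refine HasDerivAt.sub (HasDerivAt.sub ?_ ?_) (HasDerivAt.fun_sum fun w _ => ?_)
    · exact (hasDerivAt_line (x.2 v) (e v)).const_mul (-(γ v))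
    · have h1 : Differentiable ℝ (deriv (U v)) :=
        (contDiff_deriv_pinning U hU v).differentiable (by simp)
      have h := (h1 (x.1 v + 0 * a v)).hasDerivAt.comp (0 : ℝ) (hasDerivAt_line (x.1 v) (a v))
      rw [zero_mul, add_zero] at h
      exact h
    · have h := hasDerivAt_poly_line (derivative (Vp v w)) (x.1 v - x.1 w) (a v - a w)
      have hfun : (fun t : ℝ =>
          (derivative (Vp v w)).eval ((x + t • (a, e)).1 v - (x + t • (a, e)).1 w))
          = fun t => (derivative (Vp v w)).eval (x.1 v - x.1 w + t * (a v - a w)) := by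
        funext t
        simp only [Prod.fst_add, Prod.smul_fst, Pi.add_apply, Pi.smul_apply, smul_eq_mul]
        ring_nf
      rw [hfun]
      exact h

end brackets

/-! ### Polynomials -/

lemma natDegree_adjRep (g : Polynomial ℝ) : (adjRep g).natDegree = g.natDegree := by
  simp [adjRep, natDegree_comp]

/-- Differentiating `g` down to degree one gives an affine polynomial that vanishes exactly
at `−adjShift g`. -/
lemma linear_step (g : Polynomial ℝ) (n : ℕ) (hg : g.natDegree = n + 1) :
    derivative^[n] g
      = C (((n + 1).factorial : ℝ) * g.leadingCoeff) * (X + C (adjShift g)) := by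
  have hl : g.leadingCoeff ≠ 0 := by
    intro h
    rw [leadingCoeff_eq_zero] at h
    simp [h] at hg
  have hl' : g.leadingCoeff = g.coeff (n + 1) := by rw [leadingCoeff, hg]
  ext k
  rw [coeff_iterate_derivative, coeff_C_mul, coeff_add, coeff_X, coeff_C]
  rcases k with _ | _ | k
  · have hn : ((n : ℝ) + 1) ≠ 0 := by positivity
    simp only [zero_add, Nat.descFactorial_self, adjShift, hg, Nat.add_sub_cancel,
      Nat.factorial_succ, nsmul_eq_mul]
    push_cast
    simp
    field_simp
  · have : (n + 1).descFactorial n = (n + 1).factorial := by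
      have h := Nat.factorial_mul_descFactorial (Nat.le_add_left n 1)
      simpa [add_comm] using h
    simp [this, hl', add_comm]
  · rw [coeff_eq_zero_of_natDegree_lt (by omega)]
    simp

/-! ### The set `𝓜` -/

section MMlemmas

variable {V : Type} [Fintype V] [DecidableEq V] {Vstar : Finset V}
  {X₀ : Phase V → Phase V}

lemma MM.zero_of {Y : Phase V → Phase V} (h : MM Vstar X₀ Y) : MM Vstar X₀ (fun _ => 0) := by
  have := MM.smul 0 h
  rwa [zero_smul] at this

lemma MM.congr {Y Z : Phase V → Phase V} (h : MM Vstar X₀ Y) (e : Y = Z) : MM Vstar X₀ Z :=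
  e ▸ h

lemma MM.sum_of {Y : Phase V → Phase V} (h : MM Vstar X₀ Y) (s : Finset V)
    (F : V → Phase V → Phase V) (hF : ∀ v ∈ s, MM Vstar X₀ (F v)) :
    MM Vstar X₀ (∑ v ∈ s, F v) := by
  induction s using Finset.induction_on with
  | empty => exact h.zero_of
  | insert a s ha ih =>
    rw [Finset.sum_insert ha]
    exact MM.add (hF a (by simp)) (ih fun v hv => hF v (by simp [hv]))

end MMlemmas

section main

variable {V : Type} [Fintype V] [DecidableEq V] {G : SimpleGraph V} [DecidableRel G.Adj]
  {Vstar : Finset V} {γ : V → ℝ} {U : V → ℝ → ℝ} {Vp : V → V → Polynomial ℝ} {c : V}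

/-- The friction terms produced by bracketing with `X₀` lie in `𝓜`, as they involve only
`v ∈ V*`. -/
lemma dq_of_dp (hγ0 : ∀ v ∉ Vstar, γ v = 0) (hU : ∀ v, ContDiff ℝ (⊤ : ℕ∞) (U v))
    {e : V → ℝ} (h : MM Vstar (X0 G γ U Vp) (fun _ => (0, e))) :
    MM Vstar (X0 G γ U Vp) (fun _ => (e, 0)) := by
  have h1 := MM.lieX h
  rw [lieB_const_X0 G γ U Vp hU] at h1
  have h2 := MM.sum_of h Vstar (fun v => (γ v * e v) • dp v)
    fun v hv => MM.smul _ (MM.basic v hv)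
  refine (MM.add h1 h2).congr ?_
  funext x
  refine Prod.ext ?_ ?_
  · simp [Prod.fst_sum, Finset.sum_apply, dp]
  · funext v
    by_cases hv : v ∈ Vstar
    · simp [Prod.snd_sum, Finset.sum_apply, dp, Pi.single_apply, hv]
    · simp [Prod.snd_sum, Finset.sum_apply, dp, Pi.single_apply, hv, hγ0 v hv]

/-- `∑_{v∈𝒯} V''_{cv}(q_c − q_v) ∂_{p_v} ∈ 𝓜`. -/
lemma hessian_mem (hU : ∀ v, ContDiff ℝ (⊤ : ℕ∞) (U v))
    (hsym : ∀ u v, G.Adj u v → ∀ x : ℝ, (Vp v u).eval x = (Vp u v).eval (-x))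
    (hc : Controllable Vstar (X0 G γ U Vp) c) :
    MM Vstar (X0 G γ U Vp)
      (polyField c fun v => if G.Adj c v then derivative (derivative (Vp c v)) else 0) := by
  have h1 := MM.lieX hc.1
  unfold dq at h1
  rw [lieB_const_X0 G γ U Vp hU] at h1
  -- the `∂_{p_c}`-component of the bracket, with opposite sign
  let f : Phase V → ℝ := fun x => deriv (deriv (U c)) (x.1 c) +
    ∑ w ∈ Finset.univ.filter (fun w => G.Adj c w),
      (derivative (derivative (Vp c w))).eval (x.1 c - x.1 w)
  have hf : ContDiff ℝ (⊤ : ℕ∞) f := by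
    refine ContDiff.add ?_ (ContDiff.sum fun w _ => ?_)
    · exact (contDiff_infty_iff_deriv.1 (contDiff_deriv_pinning U hU c)).2.comp (by fun_prop)
    · have hp := (derivative (derivative (Vp c w))).contDiff_aeval (𝕜 := ℝ) (⊤ : ℕ∞)
      simp only [coe_aeval_eq_eval] at hp
      exact hp.comp (by fun_prop)
  refine (MM.add h1 (MM.mulS f hf hc.2)).congr ?_
  funext x
  refine Prod.ext (by simp [polyField, dp]) ?_
  funext v
  by_cases hv : v = c
  · subst hv
    have : ∀ w ∈ Finset.univ.filter (fun w => G.Adj v w),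
        (derivative (derivative (Vp v w))).eval (x.1 v - x.1 w) *
          ((Pi.single v 1 : V → ℝ) v - (Pi.single v 1 : V → ℝ) w)
        = (derivative (derivative (Vp v w))).eval (x.1 v - x.1 w) := by
      intro w hw
      have : w ≠ v := (G.ne_of_adj (Finset.mem_filter.1 hw).2).symm
      simp [this]
    simp only [Pi.add_apply, Prod.snd_add, polyField, dp, f]
    rw [Finset.sum_congr rfl this]
    simp
  · have : ∀ w, (derivative (derivative (Vp v w))).eval (x.1 v - x.1 w) *
          ((Pi.single c 1 : V → ℝ) v - (Pi.single c 1 : V → ℝ) w)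
        = if w = c then -(derivative (derivative (Vp v c))).eval (x.1 v - x.1 c) else 0 := by
      intro w
      by_cases hw : w = c
      · subst hw; simp [hv]
      · simp [hv, hw]
    simp only [Pi.add_apply, Prod.snd_add, polyField, dp, this]
    rw [Finset.sum_ite_eq']
    by_cases ha : G.Adj c v
    · have hp : Vp v c = (Vp c v).comp (-X) := by
        refine Polynomial.funext fun y => ?_
        simp [hsym c v ha y]
      have hp2 : derivative (derivative (Vp v c)) =
          (derivative (derivative (Vp c v))).comp (-X) := by
        rw [hp]; simp [derivative_comp]
      simp [ha, ha.symm, hv, hp2]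
    · have ha' : ¬ G.Adj v c := fun h => ha h.symm
      simp [ha, ha', hv]

lemma hessian_deriv_mem (hU : ∀ v, ContDiff ℝ (⊤ : ℕ∞) (U v))
    (hsym : ∀ u v, G.Adj u v → ∀ x : ℝ, (Vp v u).eval x = (Vp u v).eval (-x))
    (hc : Controllable Vstar (X0 G γ U Vp) c) (k : ℕ) :
    MM Vstar (X0 G γ U Vp)
      (polyField c fun v =>
        if G.Adj c v then derivative^[k] (derivative (derivative (Vp c v))) else 0) := by
  induction k with
  | zero => simpa using hessian_mem hU hsym hc
  | succ k ih =>
    have h := MM.lie hc.1 ih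
    unfold dq at h
    rw [lieB_const_polyField] at h
    refine h.congr (congrArg _ ?_)
    funext v
    by_cases ha : G.Adj c v
    · simp [ha, (G.ne_of_adj ha).symm, Function.iterate_succ_apply']
    · simp [ha]

/-- If the space of coefficient vectors on the finite set `D` is stable under `a ↦ a b`, then it
is stable under `a ↦ a b⁻¹` (with `0⁻¹ = 0`): interpolate `b⁻¹` by a polynomial in `b`. -/
lemma divide_coeff_mem {X₀ : Phase V → Phase V} {D : Finset V} {b : V → ℝ}
    (hmul : ∀ a : V → ℝ, MM Vstar X₀ (fun _ => (0, fun v => if v ∈ D then a v else 0)) →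
      MM Vstar X₀ (fun _ => (0, fun v => if v ∈ D then a v * b v else 0)))
    {a : V → ℝ} (h : MM Vstar X₀ (fun _ => (0, fun v => if v ∈ D then a v else 0))) :
    MM Vstar X₀ (fun _ => (0, fun v => if v ∈ D then a v * (b v)⁻¹ else 0)) := by
  have hpow : ∀ n : ℕ,
      MM Vstar X₀ (fun _ => (0, fun v => if v ∈ D then a v * b v ^ n else 0)) := by
    intro n
    induction n with
    | zero => simpa using h
    | succ n ih => simpa only [pow_succ, mul_assoc] using hmul _ ih
  have hpoly : ∀ p : Polynomial ℝ,
      MM Vstar X₀ (fun _ => (0, fun v => if v ∈ D then a v * p.eval (b v) else 0)) := by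
    intro p
    induction p using Polynomial.induction_on' with
    | add p q hp hq =>
      refine (MM.add hp hq).congr ?_
      funext x
      refine Prod.ext (by simp) ?_
      funext v
      by_cases hv : v ∈ D <;> simp [hv, mul_add]
    | monomial n r =>
      refine (MM.smul r (hpow n)).congr ?_
      funext x
      refine Prod.ext (by simp) ?_
      funext v
      by_cases hv : v ∈ D <;> simp [hv, mul_left_comm]
  refine (hpoly (Lagrange.interpolate (D.image b) id (fun y => y⁻¹))).congr ?_
  funext x
  refine Prod.ext rfl ?_
  funext v
  by_cases hv : v ∈ D
  · have := Lagrange.eval_interpolate_at_node (s := D.image b) (v := id) (fun y : ℝ => y⁻¹)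
      Function.injective_id.injOn (Finset.mem_image_of_mem b hv)
    simp only [id] at this
    simp only [hv, if_true, this]
  · simp [hv]

end main

/-- Lemma 4.7 (iii). Assume `c` is controllable and `d ≥ 2`. For real
constants `α_v, β_v` (`v ∈ D^d`): (1) if `∑_{v∈D^d} α_v ∂_{p_v} ∈ 𝓜` then
`∑_{v∈D^d} α_v x_v ∂_{p_v} ∈ 𝓜`; (2) if `∑ α_v ∂_{p_v} ∈ 𝓜` and `∑ β_v ∂_{p_v} ∈ 𝓜`,
then `∑ α_v β_v ∂_{p_v} ∈ 𝓜`. -/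
theorem coefficient_fields_mem
    {V : Type} [Fintype V] [DecidableEq V] (G : SimpleGraph V) [DecidableRel G.Adj]
    (Vstar : Finset V) (γ : V → ℝ) (U : V → ℝ → ℝ) (Vp : V → V → Polynomial ℝ)
    (hγpos : ∀ v ∈ Vstar, 0 < γ v) (hγ0 : ∀ v ∉ Vstar, γ v = 0)
    (hU : ∀ v, ContDiff ℝ (⊤ : ℕ∞) (U v))
    (hsym : ∀ u v, G.Adj u v → ∀ x : ℝ, (Vp v u).eval x = (Vp u v).eval (-x))
    (hdeg : ∀ u v, G.Adj u v → 3 ≤ (Vp u v).natDegree)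
    (c : V) (hc : Controllable Vstar (X0 G γ U Vp) c)
    (hd : 2 ≤ dmax G Vp c) (α β : V → ℝ) :
    (MM Vstar (X0 G γ U Vp)
        (fun _ => ((0 : V → ℝ), ∑ v ∈ Dd G Vp c, Pi.single v (α v))) →
      MM Vstar (X0 G γ U Vp)
        (fun x => ((0 : V → ℝ), ∑ v ∈ Dd G Vp c, Pi.single v (α v * xv Vp c v x)))) ∧
    (MM Vstar (X0 G γ U Vp)
        (fun _ => ((0 : V → ℝ), ∑ v ∈ Dd G Vp c, Pi.single v (α v))) →
      MM Vstar (X0 G γ U Vp)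
        (fun _ => ((0 : V → ℝ), ∑ v ∈ Dd G Vp c, Pi.single v (β v))) →
      MM Vstar (X0 G γ U Vp)
        (fun _ => ((0 : V → ℝ), ∑ v ∈ Dd G Vp c, Pi.single v (α v * β v)))) := by
  have hsum : ∀ a : V → ℝ, (∑ v ∈ Dd G Vp c, Pi.single v (a v) : V → ℝ)
      = fun v => if v ∈ Dd G Vp c then a v else 0 := by
    intro a
    funext v
    simp [Finset.sum_apply, Pi.single_apply]
  simp only [hsum]
  set D := Dd G Vp c with hD
  obtain ⟨n, hn⟩ : ∃ n, dmax G Vp c = n + 2 := ⟨dmax G Vp c - 2, by omega⟩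
  have hadj : ∀ v ∈ D, G.Adj c v := fun v hv => by
    simpa [hD, Dd, Tset] using (Finset.mem_filter.1 hv).1
  have hdegD : ∀ v ∈ D, (derivative (derivative (Vp c v))).natDegree = n + 1 + 1 := fun v hv => by
    have h := (Finset.mem_filter.1 hv).2
    rwa [ft, natDegree_adjRep, hn] at h
  have hcD : c ∉ D := fun h => G.loopless.irrefl c (hadj c h)
  let b : V → ℝ := fun v =>
    ((n + 1 + 1).factorial : ℝ) * (derivative (derivative (Vp c v))).leadingCoeff
  have hb : ∀ v ∈ D, b v ≠ 0 := fun v hv => by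
    refine mul_ne_zero (by positivity) fun h => ?_
    rw [leadingCoeff_eq_zero] at h
    have := hdegD v hv
    simp [h] at this
  let Q : (V → ℝ) → V → Polynomial ℝ := fun a v => if v ∈ D then
    C (a v) * (X + C (adjShift (derivative (derivative (Vp c v))))) else 0
  -- `∑ α_v b_v x_v ∂_{p_v} ∈ 𝓜`
  have hQ : ∀ a : V → ℝ,
      MM Vstar (X0 G γ U Vp) (fun _ => (0, fun v => if v ∈ D then a v else 0)) →
      MM Vstar (X0 G γ U Vp) (polyField c (Q fun v => a v * b v)) := by
    intro a ha
    have h := MM.smul (-1) (MM.lie (dq_of_dp hγ0 hU ha) (hessian_deriv_mem hU hsym hc n))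
    rw [lieB_const_polyField] at h
    refine h.congr ?_
    funext x
    refine Prod.ext (by simp [polyField]) ?_
    funext v
    by_cases hv : v ∈ D
    · have hl := linear_step _ _ (hdegD v hv)
      rw [Function.iterate_succ_apply'] at hl
      simp only [polyField, Q, hv, hcD, hadj v hv, hl, b, if_true, if_false, Pi.smul_apply,
        Prod.smul_snd, smul_eq_mul, eval_mul, eval_C]
      ring
    · simp [polyField, Q, hv, hcD]
  -- brackets of such fields with constant fields in the `q`-directions
  have hbr : ∀ a e f : V → ℝ, (∀ v ∈ D, e c - e v = f v) →
      lieB (fun _ => (e, 0)) (polyField c (Q a))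
        = fun _ => (0, fun v => if v ∈ D then a v * f v else 0) := by
    intro a e f hf
    rw [lieB_const_polyField]
    funext x
    refine Prod.ext rfl ?_
    funext v
    by_cases hv : v ∈ D
    · simp only [polyField, Q, hv, ← hf v hv, if_true, derivative_C_mul, derivative_add, derivative_X,
        derivative_C, add_zero, mul_one, eval_mul, eval_C]
      ring
    · simp [polyField, Q, hv]
  have hmul : ∀ a : V → ℝ,
      MM Vstar (X0 G γ U Vp) (fun _ => (0, fun v => if v ∈ D then a v else 0)) →
      MM Vstar (X0 G γ U Vp) (fun _ => (0, fun v => if v ∈ D then a v * b v else 0)) := by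
    intro a ha
    refine (MM.lie hc.1 (hQ a ha)).congr ?_
    unfold dq
    rw [hbr _ _ (fun _ => 1)]
    · simp
    · intro v hv
      have : v ≠ c := fun h => hcD (h ▸ hv)
      simp [this]
  refine ⟨fun hα => ?_, fun hα hβ => ?_⟩
  · refine (hQ _ (divide_coeff_mem hmul hα)).congr ?_
    funext x
    refine Prod.ext rfl ?_
    funext v
    by_cases hv : v ∈ D
    · simp [polyField, Q, hv, xv, inv_mul_cancel_right₀ (hb v hv)]
    · simp [polyField, Q, hv]
  · have h := MM.smul (-1) (MM.lie (dq_of_dp hγ0 hU hβ) (hQ _ (divide_coeff_mem hmul hα)))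
    rw [hbr _ _ (fun v => - β v) (fun v hv => by simp [hv, hcD])] at h
    refine h.congr ?_
    funext x
    refine Prod.ext (by simp) ?_
    funext v
    by_cases hv : v ∈ D
    · simp [hv, inv_mul_cancel_right₀ (hb v hv)]
    · simp [hv]
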